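/- Let d, N be positive integers, let α, σ be positive real numbers, and let y_1, …, y_N ∈ ℝ^d. For x ∈ ℝ^d define v_i(x) = exp(-‖x - α·y_i‖² / (2σ²)) and w_i(x) = v_i(x) / Σ_{j=1}^N v_j(x). Then the map m : ℝ^d → ℝ^d given by m(x) = Σ_{i=1}^N w_i(x)·y_i is differentiable, and for every x its Fréchet derivative, viewed as a d×d matrix (Jacobian), equals (α/σ²)·[ Σ_{i=1}^N w_i(x)·y_i y_iᵀ − m(x) m(x)ᵀ ]. -/

import Mathlib

open scoped BigOperators

/-- The outer product `u vᵀ` of two vectors in `ℝ^d`, with `(k,l)` entry `u k * v l`. -/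
def outer {d : ℕ} (u v : EuclideanSpace ℝ (Fin d)) : Matrix (Fin d) (Fin d) ℝ :=
  Matrix.of fun k l => u k * v l

lemma hasFDerivAt_weight {d N : ℕ} (hN : 0 < N) (α σ : ℝ) (hσ : 0 < σ)
    (y : Fin N → EuclideanSpace ℝ (Fin d))
    (v w : Fin N → EuclideanSpace ℝ (Fin d) → ℝ)
    (m : EuclideanSpace ℝ (Fin d) → EuclideanSpace ℝ (Fin d))
    (hv : ∀ i x, v i x = Real.exp (-‖x - α • y i‖ ^ 2 / (2 * σ ^ 2)))
    (hw : ∀ i x, w i x = v i x / ∑ j, v j x)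
    (hm : ∀ x, m x = ∑ i, w i x • y i) (i : Fin N) (x : EuclideanSpace ℝ (Fin d)) :
    HasFDerivAt (w i) ((w i x * (α / σ ^ 2)) • innerSL ℝ (y i - m x)) x := by
  have hvpos : ∀ i x, 0 < v i x := fun i x => by rw [hv]; exact Real.exp_pos _
  have hS : 0 < ∑ j, v j x := by
    have : Nonempty (Fin N) := ⟨⟨0, hN⟩⟩
    exact Finset.sum_pos (fun j _ => hvpos j x) Finset.univ_nonempty
  have hvd : ∀ j, HasFDerivAt (v j) ((v j x * (-(1 / σ ^ 2))) • innerSL ℝ (x - α • y j)) x := by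
    intro j
    have h1 : HasFDerivAt (fun z : EuclideanSpace ℝ (Fin d) => z - α • y j)
        (ContinuousLinearMap.id ℝ _) x := (hasFDerivAt_id x).sub_const _
    have h2 := ((h1.norm_sq).mul_const (-(1 / (2 * σ ^ 2)))).exp
    have h3 : v j = fun z => Real.exp (‖z - α • y j‖ ^ 2 * (-(1 / (2 * σ ^ 2)))) := by
      funext z; rw [hv]; congr 1; ring
    rw [h3]
    refine h2.congr_fderiv ?_
    ext h
    simp
    field_simp
  have hSd : HasFDerivAt (fun z => ∑ j, v j z)
      (∑ j, (v j x * (-(1 / σ ^ 2))) • innerSL ℝ (x - α • y j)) x :=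
    HasFDerivAt.fun_sum fun j _ => hvd j
  have hwd := (hvd i).mul ((hasDerivAt_inv hS.ne').comp_hasFDerivAt x hSd)
  have hwe : w i = fun z => v i z * (∑ j, v j z)⁻¹ := by
    funext z; rw [hw, div_eq_mul_inv]
  have hvw : ∀ j, v j x = w j x * ∑ j, v j x := fun j => by rw [hw]; field_simp
  have hsum : ∑ j, w j x = 1 := by
    simp only [hw]; rw [← Finset.sum_div, div_self hS.ne']
  rw [hwe]
  refine hwd.congr_fderiv ?_
  rw [← hwe]
  ext h
  have key : ∑ j, v j x * (-(1 / σ ^ 2)) * inner ℝ (x - α • y j) h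
      = (∑ j, v j x) * (-(1 / σ ^ 2)) * (inner ℝ x h - α * inner ℝ (m x) h) := by
    have : inner ℝ (m x) h = ∑ j, w j x * inner ℝ (y j) h := by
      rw [hm, sum_inner]; simp [inner_smul_left]
    rw [this]
    have h1 : inner ℝ x h = ∑ j, w j x * inner ℝ x h := by
      rw [← Finset.sum_mul, hsum, one_mul]
    rw [h1, Finset.mul_sum, ← Finset.sum_sub_distrib, Finset.mul_sum]
    refine Finset.sum_congr rfl fun j _ => ?_
    rw [inner_sub_left, inner_smul_left, hvw j]
    simp
    ring
  have key2 : (∑ j, (v j x * (-(1 / σ ^ 2))) • innerSL ℝ (x - α • y j)) h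
      = (∑ j, v j x) * (-(1 / σ ^ 2)) * (inner ℝ x h - α * inner ℝ (m x) h) := by
    rw [← key]; simp [inner_sub_left, inner_smul_left]
  simp only [Function.comp_apply, add_apply, smul_apply, key2, smul_eq_mul,
    innerSL_apply_apply, inner_sub_left, inner_smul_left, hw i x]
  generalize (∑ j, v j x) = S at *
  simp
  field_simp
  ring

/-- the Jacobian of the softmax-weighted mean `m x = Σᵢ wᵢ(x) • yᵢ`
equals `(α/σ²) • [Σᵢ wᵢ(x) • yᵢyᵢᵀ − m(x)m(x)ᵀ]`. -/
theorem jacobian_softmax_weighted_mean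
    (d N : ℕ) (hd : 0 < d) (hN : 0 < N) (α σ : ℝ) (hα : 0 < α) (hσ : 0 < σ)
    (y : Fin N → EuclideanSpace ℝ (Fin d))
    (v w : Fin N → EuclideanSpace ℝ (Fin d) → ℝ)
    (m : EuclideanSpace ℝ (Fin d) → EuclideanSpace ℝ (Fin d))
    (hv : ∀ i x, v i x = Real.exp (-‖x - α • y i‖ ^ 2 / (2 * σ ^ 2)))
    (hw : ∀ i x, w i x = v i x / ∑ j, v j x)
    (hm : ∀ x, m x = ∑ i, w i x • y i) :
    Differentiable ℝ m ∧
      ∀ x, (Matrix.of fun k l => (fderiv ℝ m x (EuclideanSpace.single l 1)) k) =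
        (α / σ ^ 2) •
          (∑ i, w i x • outer (y i) (y i) - outer (m x) (m x)) := by
  have hd' : ∀ x, HasFDerivAt m
      (∑ i, ((w i x * (α / σ ^ 2)) • innerSL ℝ (y i - m x)).smulRight (y i)) x := by
    intro x
    have : m = fun z => ∑ i, w i z • y i := funext hm
    have h := HasFDerivAt.fun_sum (u := Finset.univ) fun i _ =>
      (hasFDerivAt_weight hN α σ hσ y v w m hv hw hm i x).smul_const (y i)
    rw [← this] at h
    exact h
  refine ⟨fun x => (hd' x).differentiableAt, fun x => ?_⟩
  rw [(hd' x).fderiv]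
  ext k l
  have hmk : ∀ k, m x k = ∑ i, w i x * y i k := fun k => by
    rw [hm]; simp
  have e1 : ((α / σ ^ 2) • (∑ i, w i x • outer (y i) (y i) - outer (m x) (m x))) k l
      = α / σ ^ 2 * (∑ i, w i x * (y i k * y i l) - m x k * m x l) := by
    simp [outer, Matrix.sum_apply]
  rw [e1, hmk k, Finset.sum_mul, ← Finset.sum_sub_distrib, Finset.mul_sum]
  simp [EuclideanSpace.inner_single_right]
  refine Finset.sum_congr rfl fun i _ => ?_
  ring
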